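/- For any cubic homogeneous polynomial f in n variables and any integer r ≥ 2, one has f_{Δ(n,r)} − f̲ ≤ (4/r − 4/r^2)·(f̄ − f̲). -/

import Mathlib

/-- The regular grid `Δ(n,r)` in the standard simplex. -/
def grid (n r : ℕ) : Set (Fin n → ℝ) :=
  {x | x ∈ stdSimplex ℝ (Fin n) ∧ ∀ i, ∃ m : ℕ, (r : ℝ) * x i = m}

/-!
Let `B_r f x` be the mean of `f (S / r)`, where `S` is multinomial with parameters `r` and `x`.
By the moments of `S`, for a cubic form `f` there are `a` and `b`, independent of `r`, with
`r ^ 3 * B_r f x = r * a + r (r - 1) * b + r (r - 1) (r - 2) * f x`.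
Solving for `a` and `b` at `r = 1` and `r = 2` gives
`r ^ 2 * B_r f x = 4 (r - 1) * B_2 f x - (r - 2) * B_1 f x + (r - 1) (r - 2) * f x`.
At a minimiser `x` of `f`, bound `B_r f x` below by the minimum on the grid, `B_2 f x` above by the
maximum on the simplex and `B_1 f x` below by the minimum on the simplex.
-/

open Finset MvPolynomial

section Moments

lemma cast_descFactorial_three {S : Type*} [Ring S] (r : ℕ) :
    (r.descFactorial 3 : S) = r * (r - 1) * (r - 2) := by
  rcases lt_or_ge r 2 with hr | hr
  · interval_cases r <;> simp
  · rw [Nat.descFactorial_succ, mul_comm, Nat.cast_mul, Nat.cast_descFactorial_two,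
      Nat.cast_sub hr, Nat.cast_two]

variable {ι R : Type*} [CommSemiring R]

/-- The derivation `X i * ∂ / ∂ X i`. It acts on a monomial as multiplication by the exponent of
`X i`, which is how the moments of the multinomial distribution are computed. -/
noncomputable def eulerDeriv (i : ι) : Derivation R (MvPolynomial ι R) (MvPolynomial ι R) :=
  (X i : MvPolynomial ι R) • pderiv i

lemma eulerDeriv_X [DecidableEq ι] (i j : ι) :
    eulerDeriv i (X j : MvPolynomial ι R) = if i = j then X i else 0 := by
  simp [eulerDeriv, pderiv_X, Pi.single_apply, eq_comm]

variable [Fintype ι]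

lemma eulerDeriv_sum_X_pow (i : ι) (r : ℕ) :
    eulerDeriv i ((∑ j, X j) ^ r : MvPolynomial ι R) = r • ((∑ j, X j) ^ (r - 1) * X i) := by
  classical simp [Derivation.leibniz_pow, eulerDeriv_X]

lemma eulerDeriv_prod_X_pow (i : ι) (α : ι → ℕ) :
    eulerDeriv i (∏ j, X j ^ α j : MvPolynomial ι R) = α i • ∏ j, X j ^ α j := by
  simp only [eulerDeriv, prod_X_pow, Derivation.smul_apply, smul_eq_mul, X_mul_pderiv_monomial,
    Finsupp.indicator_of_mem (mem_univ i)]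

variable [DecidableEq ι]

lemma eulerDeriv_eulerDeriv_sum_X_pow (i j : ι) (r : ℕ) :
    eulerDeriv i (eulerDeriv j ((∑ l, X l) ^ r : MvPolynomial ι R)) =
      r.descFactorial 2 • ((∑ l, X l) ^ (r - 2) * (X i * X j)) +
        r • ((∑ l, X l) ^ (r - 1) * if i = j then X i else 0) := by
  rw [eulerDeriv_sum_X_pow, map_nsmul, Derivation.leibniz, eulerDeriv_sum_X_pow, eulerDeriv_X]
  simp only [smul_eq_mul, nsmul_eq_mul, Nat.descFactorial, Nat.sub_sub, Nat.sub_zero,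
    Nat.cast_mul, Nat.cast_one]
  ring

lemma eval_eulerDeriv_eulerDeriv_eulerDeriv_sum_X_pow (x : ι → R) (r : ℕ) (i j k : ι) :
    eval x (eulerDeriv i (eulerDeriv j (eulerDeriv k ((∑ l, X l) ^ r)))) =
      ∑ α ∈ piAntidiag univ r,
        Nat.multinomial univ α * (∏ l, x l ^ α l) * (α i * α j * α k) := by
  simp only [sum_pow_eq_sum_piAntidiag, ← nsmul_eq_mul, map_sum, map_nsmul,
    eulerDeriv_prod_X_pow, map_prod, map_pow, eval_X]
  simp only [nsmul_eq_mul]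
  exact sum_congr rfl fun α _ ↦ by ring

theorem multinomial_third_moment {x : ι → R} (hx : ∑ i, x i = 1) (r : ℕ) (i j k : ι) :
    ∑ α ∈ piAntidiag univ r, Nat.multinomial univ α * (∏ l, x l ^ α l) * (α i * α j * α k) =
      r.descFactorial 3 * (x i * x j * x k) +
        r.descFactorial 2 * ((if i = j then x i * x k else 0) + (if i = k then x i * x j else 0) +
          (if j = k then x i * x j else 0)) +
        r * (if i = j ∧ j = k then x i else 0) := by
  have eval_sum_X : eval x (∑ l, X l) = 1 := by simpa only [map_sum, eval_X] using hx
  rw [← eval_eulerDeriv_eulerDeriv_eulerDeriv_sum_X_pow,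
    eulerDeriv_eulerDeriv_sum_X_pow]
  simp only [eulerDeriv_sum_X_pow, eulerDeriv_X, Derivation.leibniz, apply_ite (eulerDeriv _),
    map_add, map_nsmul, map_zero]
  simp only [apply_ite (eval x), smul_eq_mul, nsmul_eq_mul, map_add, map_mul, map_pow, map_zero,
    map_natCast, eval_X, eval_sum_X, one_pow, one_mul, Nat.sub_sub, Nat.descFactorial,
    Nat.sub_zero, Nat.cast_mul, Nat.cast_one]
  split_ifs <;> grind

end Moments

section Bernstein

variable {ι : Type*} [Fintype ι] [DecidableEq ι]

/-- The Bernstein operator of order `r` on the simplex: the mean of `f (α / r)` when `α` is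
multinomially distributed with parameters `r` and `x`. -/
noncomputable def simplexBernstein (r : ℕ) (f : (ι → ℝ) → ℝ) (x : ι → ℝ) : ℝ :=
  ∑ α ∈ piAntidiag univ r, Nat.multinomial univ α * (∏ i, x i ^ α i) * f (fun i ↦ α i / r)

lemma simplexBernstein_add (r : ℕ) (f g : (ι → ℝ) → ℝ) (x : ι → ℝ) :
    simplexBernstein r (fun y ↦ f y + g y) x =
      simplexBernstein r f x + simplexBernstein r g x := by
  simp only [simplexBernstein, mul_add, sum_add_distrib]

lemma simplexBernstein_const_mul (r : ℕ) (c : ℝ) (f : (ι → ℝ) → ℝ) (x : ι → ℝ) :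
    simplexBernstein r (fun y ↦ c * f y) x = c * simplexBernstein r f x := by
  simp only [simplexBernstein, mul_sum, mul_left_comm c]

lemma cube_mul_simplexBernstein_monomial {r : ℕ} (hr : r ≠ 0) {x : ι → ℝ} (hx : ∑ i, x i = 1)
    (i j k : ι) :
    (r : ℝ) ^ 3 * simplexBernstein r (fun y ↦ y i * y j * y k) x =
      r * (r - 1) * (r - 2) * (x i * x j * x k) +
        r * (r - 1) * ((if i = j then x i * x k else 0) + (if i = k then x i * x j else 0) +
          (if j = k then x i * x j else 0)) +
        r * (if i = j ∧ j = k then x i else 0) := by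
  rw [← cast_descFactorial_three, ← Nat.cast_descFactorial_two,
    ← multinomial_third_moment hx, simplexBernstein, mul_sum]
  refine sum_congr rfl fun α _ ↦ ?_
  field_simp

lemma sq_mul_simplexBernstein_monomial {r : ℕ} (hr : r ≠ 0) {x : ι → ℝ}
    (hx : ∑ i, x i = 1) (i j k : ι) :
    (r : ℝ) ^ 2 * simplexBernstein r (fun y ↦ y i * y j * y k) x =
      4 * (r - 1) * simplexBernstein 2 (fun y ↦ y i * y j * y k) x -
        (r - 2) * simplexBernstein 1 (fun y ↦ y i * y j * y k) x +
        (r - 1) * (r - 2) * (x i * x j * x k) := by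
  have order_one := cube_mul_simplexBernstein_monomial one_ne_zero hx i j k
  have order_two := cube_mul_simplexBernstein_monomial two_ne_zero hx i j k
  have order_r := cube_mul_simplexBernstein_monomial hr hx i j k
  push_cast at order_one order_two
  have hr' : (r : ℝ) ≠ 0 := Nat.cast_ne_zero.2 hr
  refine mul_left_cancel₀ hr' ?_
  linear_combination order_r - r * (r - 1) / 2 * order_two + r * (r - 2) * order_one

end Bernstein

section Homogeneous

lemma homogeneousSubmodule_three_eq_span (σ R : Type*) [CommSemiring R] :
    homogeneousSubmodule σ R 3 =
      Submodule.span R (Set.range fun t : σ × σ × σ ↦ X t.1 * X t.2.1 * X t.2.2) := by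
  rw [← homogeneousSubmodule_one_pow, homogeneousSubmodule_one_eq_span_X, pow_three',
    Submodule.span_mul_span, Submodule.span_mul_span]
  congr 1
  ext p
  simp [Set.mem_mul]

theorem sq_mul_simplexBernstein_of_isHomogeneous {ι : Type*} [Fintype ι] [DecidableEq ι]
    {p : MvPolynomial ι ℝ} (hp : p.IsHomogeneous 3) {r : ℕ} (hr : r ≠ 0) {x : ι → ℝ}
    (hx : ∑ i, x i = 1) :
    (r : ℝ) ^ 2 * simplexBernstein r (fun y ↦ eval y p) x =
      4 * (r - 1) * simplexBernstein 2 (fun y ↦ eval y p) x -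
        (r - 2) * simplexBernstein 1 (fun y ↦ eval y p) x + (r - 1) * (r - 2) * eval x p := by
  rw [← mem_homogeneousSubmodule, homogeneousSubmodule_three_eq_span] at hp
  induction hp using Submodule.span_induction with
  | mem q hq =>
    obtain ⟨⟨i, j, k⟩, rfl⟩ := hq
    simpa only [map_mul, eval_X] using sq_mul_simplexBernstein_monomial hr hx i j k
  | zero => simp [simplexBernstein]
  | add q₁ q₂ _ _ h₁ h₂ =>
    simp only [map_add, simplexBernstein_add]
    linear_combination h₁ + h₂
  | smul c q _ h =>
    simp only [smul_eval, simplexBernstein_const_mul]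
    linear_combination c * h

end Homogeneous

section Grid

variable {n r : ℕ}

lemma div_mem_grid (hr : r ≠ 0) {α : Fin n → ℕ} (hα : ∑ i, α i = r) :
    (fun i ↦ (α i / r : ℝ)) ∈ grid n r := by
  have hr' : (r : ℝ) ≠ 0 := Nat.cast_ne_zero.2 hr
  refine ⟨⟨fun i ↦ by positivity, ?_⟩, fun i ↦ ⟨α i, mul_div_cancel₀ _ hr'⟩⟩
  rw [← sum_div, ← Nat.cast_sum, hα, div_self hr']

lemma simplexBernstein_mem_of_convex {s : Set ℝ} (hs : Convex ℝ s) (hr : r ≠ 0)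
    {f : (Fin n → ℝ) → ℝ} (hf : Set.MapsTo f (grid n r) s) {x : Fin n → ℝ}
    (hx : x ∈ stdSimplex ℝ (Fin n)) : simplexBernstein r f x ∈ s := by
  refine hs.sum_mem (fun α _ ↦ ?_) ?_ fun α hα ↦
    hf (div_mem_grid hr (mem_piAntidiag.1 hα).1)
  · exact mul_nonneg (Nat.cast_nonneg _) (prod_nonneg fun i _ ↦ pow_nonneg (hx.1 i) _)
  · rw [← sum_pow_eq_sum_piAntidiag, hx.2, one_pow]

end Grid

theorem stmt10 (n r : ℕ) (hr : 2 ≤ r) (p : MvPolynomial (Fin n) ℝ)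
    (hp : p.IsHomogeneous 3) (fmin fmax fgrid : ℝ)
    (hmin : IsLeast ((fun y => MvPolynomial.eval y p) '' stdSimplex ℝ (Fin n)) fmin)
    (hmax : IsGreatest ((fun y => MvPolynomial.eval y p) '' stdSimplex ℝ (Fin n)) fmax)
    (hgrid : IsLeast ((fun y => MvPolynomial.eval y p) '' grid n r) fgrid) :
    fgrid - fmin ≤ (4 / r - 4 / (r : ℝ) ^ 2) * (fmax - fmin) := by
  obtain ⟨⟨x, hx, hfx⟩, fmin_le⟩ := hmin
  have hr0 : r ≠ 0 := by lia
  have hr2 : (2 : ℝ) ≤ r := by exact_mod_cast hr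
  have order_r : fgrid ≤ simplexBernstein r (fun y ↦ eval y p) x :=
    simplexBernstein_mem_of_convex (convex_Ici fgrid) hr0
      (fun y hy ↦ hgrid.2 ⟨y, hy, rfl⟩) hx
  have order_two : simplexBernstein 2 (fun y ↦ eval y p) x ≤ fmax :=
    simplexBernstein_mem_of_convex (convex_Iic fmax) two_ne_zero
      (fun y hy ↦ hmax.2 ⟨y, hy.1, rfl⟩) hx
  have order_one : fmin ≤ simplexBernstein 1 (fun y ↦ eval y p) x :=
    simplexBernstein_mem_of_convex (convex_Ici fmin) one_ne_zero
      (fun y hy ↦ fmin_le ⟨y, hy.1, rfl⟩) hx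
  have scaled : (r : ℝ) ^ 2 * (fgrid - fmin) ≤ 4 * (r - 1) * (fmax - fmin) := by
    have interpolation := sq_mul_simplexBernstein_of_isHomogeneous hp hr0 hx.2
    simp only [hfx] at interpolation
    nlinarith [mul_le_mul_of_nonneg_left order_r (sq_nonneg (r : ℝ)),
      mul_le_mul_of_nonneg_left order_two (by linarith : (0 : ℝ) ≤ r - 1),
      mul_le_mul_of_nonneg_left order_one (by linarith : (0 : ℝ) ≤ r - 2)]
  calc fgrid - fmin ≤ 4 * (r - 1) * (fmax - fmin) / (r : ℝ) ^ 2 := by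
        rw [le_div_iff₀' (by positivity)]
        exact scaled
    _ = (4 / r - 4 / (r : ℝ) ^ 2) * (fmax - fmin) := by
        field_simp
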